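/- arXiv:2601.21930 — 3 statements merged into one kernel-verified Lean document; each statement's English description precedes it below -/
import Mathlib

section
/- Assume γ₊ ≥ 0 and Γ ≥ 0, and let z∞ ∈ [0,1). If a point (ℓ,z) with ℓ ≥ 0 and r := √(ℓ² + z²) < 1 does not lie in the critical zone, i.e. it is not the case that both 0 ≤ z < z∞ and r ≥ z∞, then σ(ℓ,z) ≥ 0. -/
/-!
The damping term `Γ ℓ² F(r)` is nonnegative because `F ≥ 0` on `[0, 1)`, so it suffices that
`z∞ - z` and `arctanh z∞ - z F(r)` have the same sign outside the critical zone.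

* If `z < 0`, both are nonnegative, since `arctanh z∞ ≥ 0` and `F(r) ≥ 0`.
* If `0 ≤ z < z∞` and `r < z∞`, then `z F(r) ≤ r F(r) = arctanh r ≤ arctanh z∞`.
* If `z ≥ z∞`, then `r ≥ z ≥ z∞`, and monotonicity of `F` gives
  `z F(r) ≥ z∞ F(r) ≥ z∞ F(z∞) = arctanh z∞`.

Monotonicity of `F`, in the form `b arctanh a ≤ a arctanh b` for `0 ≤ a ≤ b < 1`
(`mul_artanh_le_mul_artanh`), is read off the power series of `arctanh`.
-/

/-- Inverse hyperbolic tangent: arctanh r = (1/2) log((1+r)/(1-r)). -/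
noncomputable def artanh (r : ℝ) : ℝ := (1/2) * Real.log ((1 + r) / (1 - r))

/-- F(r) := arctanh(r)/r with the convention F(0) = 1. -/
noncomputable def F (r : ℝ) : ℝ := if r = 0 then 1 else artanh r / r

/-- Fixed-point entropy production of the phase-covariant qubit dynamics,
extended to the whole Bloch ball, at the point with Bloch coordinates (ℓ, z). -/
noncomputable def sigmaFP (Γ γp zinf ℓ z : ℝ) : ℝ :=
  Γ * ℓ ^ 2 * F (Real.sqrt (ℓ ^ 2 + z ^ 2)) +
    γp * (zinf - z) * (artanh zinf - z * F (Real.sqrt (ℓ ^ 2 + z ^ 2)))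

lemma artanh_eq_real_artanh {x : ℝ} (h0 : 0 ≤ x) (h1 : x < 1) : artanh x = Real.artanh x :=
  (Real.artanh_eq_half_log ⟨by linarith, h1.le⟩).symm

lemma artanh_nonneg' {x : ℝ} (h0 : 0 ≤ x) (h1 : x < 1) : 0 ≤ artanh x := by
  rw [artanh_eq_real_artanh h0 h1]
  exact Real.artanh_nonneg h0

lemma artanh_mono {a b : ℝ} (ha : 0 ≤ a) (hab : a ≤ b) (hb : b < 1) : artanh a ≤ artanh b := by
  rw [artanh_eq_real_artanh ha (hab.trans_lt hb), artanh_eq_real_artanh (ha.trans hab) hb]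
  exact Real.artanh_le_artanh (by linarith) hb hab

/-- The odd power series of `2 arctanh`. -/
lemma hasSum_two_artanh {x : ℝ} (h0 : 0 ≤ x) (h1 : x < 1) :
    HasSum (fun k : ℕ => (2 : ℝ) * (1 / (2 * k + 1)) * x ^ (2 * k + 1)) (2 * artanh x) := by
  have h := Real.hasSum_log_sub_log_of_abs_lt_one (abs_lt.2 ⟨by linarith, h1⟩)
  have e : 2 * artanh x = Real.log (1 + x) - Real.log (1 - x) := by
    rw [artanh, Real.log_div (by linarith) (by linarith)]
    ring
  rwa [e]

/-- Monotonicity of `arctanh r / r` with denominators cleared: the inequality holds term by term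
in the power series, as `b a ^ (2k+1) ≤ a b ^ (2k+1)`. -/
lemma mul_artanh_le_mul_artanh {a b : ℝ} (ha : 0 ≤ a) (hab : a ≤ b) (hb : b < 1) :
    b * artanh a ≤ a * artanh b := by
  have hb0 := ha.trans hab
  have h := hasSum_le (fun k => ?_) ((hasSum_two_artanh ha (hab.trans_lt hb)).mul_left b)
    ((hasSum_two_artanh hb0 hb).mul_left a)
  · linarith
  · have hp : a ^ (2 * k) ≤ b ^ (2 * k) := pow_le_pow_left₀ ha hab _
    have hc : (0 : ℝ) ≤ 2 * (1 / (2 * k + 1)) * (a * b) := by positivity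
    have hm := mul_le_mul_of_nonneg_left hp hc
    rw [pow_succ, pow_succ]
    linarith

lemma F_nonneg {r : ℝ} (h0 : 0 ≤ r) (h1 : r < 1) : 0 ≤ F r := by
  unfold F
  split_ifs
  · exact zero_le_one
  · exact div_nonneg (artanh_nonneg' h0 h1) h0

lemma mul_F (r : ℝ) : r * F r = artanh r := by
  unfold F
  split_ifs with h
  · simp [h, artanh]
  · field_simp

/-- Outside the critical zone, the entropy production is nonnegative. -/
theorem sigmaFP_nonneg_outside_critical_zone
    (zinf Γ γp : ℝ) (hγ : 0 ≤ γp) (hΓ : 0 ≤ Γ) (hz0 : 0 ≤ zinf) (hz1 : zinf < 1)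
    (ℓ z : ℝ) (hℓ : 0 ≤ ℓ) (hr : Real.sqrt (ℓ ^ 2 + z ^ 2) < 1)
    (hcrit : ¬ (0 ≤ z ∧ z < zinf ∧ zinf ≤ Real.sqrt (ℓ ^ 2 + z ^ 2))) :
    0 ≤ sigmaFP Γ γp zinf ℓ z := by
  unfold sigmaFP
  have hzr : z ≤ Real.sqrt (ℓ ^ 2 + z ^ 2) := Real.le_sqrt_of_sq_le (by nlinarith)
  have hr0 : 0 ≤ Real.sqrt (ℓ ^ 2 + z ^ 2) := Real.sqrt_nonneg _
  generalize Real.sqrt (ℓ ^ 2 + z ^ 2) = r at *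
  have hF := F_nonneg hr0 hr
  have hA := artanh_nonneg' hz0 hz1
  refine add_nonneg (by positivity) ?_
  rw [mul_assoc]
  refine mul_nonneg hγ ?_
  rcases lt_or_ge z 0 with hz | hz
  · exact mul_nonneg (by linarith) (by nlinarith)
  rcases lt_or_ge z zinf with hzi | hzi
  · have hri : r < zinf := by
      by_contra h
      exact hcrit ⟨hz, hzi, not_lt.1 h⟩
    have h1 := mul_le_mul_of_nonneg_right hzr hF
    rw [mul_F] at h1
    have h2 := artanh_mono hr0 hri.le hz1
    exact mul_nonneg (by linarith) (by linarith)
  · refine mul_nonneg_of_nonpos_of_nonpos (by linarith) ?_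
    have h1 := mul_le_mul_of_nonneg_right hzi hF
    suffices artanh zinf ≤ zinf * F r by linarith
    rcases hr0.eq_or_lt with h | h
    -- `r = 0` forces `z∞ = 0`, where both sides vanish.
    · have hi : zinf = 0 := by linarith
      simp [hi, artanh]
    · have h2 := mul_artanh_le_mul_artanh hz0 (hzi.trans hzr) hr
      rw [← mul_F r] at h2
      exact le_of_mul_le_mul_left (by linarith) h
end

section
/- The function r ↦ (r − 1/r)·arctanh(r) (equivalently r ↦ (arctanh(r)/r)·(r² − 1)) is strictly increasing on the interval (0,1). -/
lemma le_artanh {r : ℝ} (h0 : 0 ≤ r) (h1 : r < 1) : r ≤ artanh r := by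
  simpa [artanh] using Real.sum_range_le_log_div h0 h1 1

lemma hasDerivAt_artanh {r : ℝ} (h0 : -1 < r) (h1 : r < 1) :
    HasDerivAt artanh (1 / (1 - r ^ 2)) r := by
  have hp : 1 + r ≠ 0 := by linarith
  have hm : 1 - r ≠ 0 := by linarith
  have hq : 1 - r ^ 2 ≠ 0 := by
    rw [show 1 - r ^ 2 = (1 + r) * (1 - r) by ring]
    exact mul_ne_zero hp hm
  have h := (((((hasDerivAt_id r).const_add 1).div ((hasDerivAt_id r).const_sub 1) hm).log
    (div_ne_zero hp hm)).const_mul (1 / 2))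
  refine h.congr_deriv ?_
  simp only [id, Pi.div_apply]
  field_simp
  ring

/-- r ↦ (r − 1/r)·arctanh r is strictly increasing on (0,1). -/
theorem strictMonoOn_sub_inv_mul_artanh :
    StrictMonoOn (fun r : ℝ => (r - 1 / r) * artanh r) (Set.Ioo 0 1) := by
  have hd : ∀ r ∈ Set.Ioo (0 : ℝ) 1, HasDerivAt (fun r : ℝ => (r - 1 / r) * artanh r)
      (((1 + r ^ 2) * artanh r - r) / r ^ 2) r := by
    rintro r ⟨h0, h1⟩
    have hr : r ≠ 0 := h0.ne'
    have hq : 1 - r ^ 2 ≠ 0 := by nlinarith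
    have h := ((hasDerivAt_id r).sub (hasDerivAt_inv hr)).mul
      (hasDerivAt_artanh (by linarith) h1)
    simp only [one_div]
    refine h.congr_deriv ?_
    simp only [id, Pi.sub_apply]
    field_simp
    ring
  refine strictMonoOn_of_deriv_pos (convex_Ioo 0 1)
    (fun r hr => (hd r hr).continuousAt.continuousWithinAt) fun r hr => ?_
  rw [interior_Ioo] at hr
  rw [(hd r hr).deriv]
  have h0 : 0 < r := hr.1
  have hA := le_artanh h0.le hr.2
  have : 0 < r ^ 2 * artanh r := mul_pos (by positivity) (h0.trans_le hA)
  exact div_pos (by linarith) (by positivity)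
end

section
/- Let z∞ ∈ (0,1) and set α := 1 − √(1 − z∞²). Then for every z ∈ [0, z∞] and every ℓ ≥ 0 such that z∞² ≤ ℓ² + z² < 1, writing r := √(ℓ² + z²), one has s_m(ℓ,z) := (α/2)·(ℓ²/r)·arctanh(r) + (z∞ − z)·(arctanh(z∞) − (z/r)·arctanh(r)) ≥ 0. (This is the key sufficiency estimate: for the marginally P-divisible dynamics with 2Γ = α·γ₊, the entropy production is nonnegative throughout the critical zone.) -/
lemma self_le_artanh {x : ℝ} (h0 : 0 ≤ x) (h1 : x < 1) : x ≤ artanh x := by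
  have h := Real.sum_range_le_log_div h0 h1 1
  simpa [artanh] using h

/-- With `u = artanh x` this is `u ≤ sinh u`. -/
lemma artanh_mul_sqrt_le {x : ℝ} (h0 : 0 ≤ x) (h1 : x < 1) :
    artanh x * √(1 - x ^ 2) ≤ x := by
  have hs : 0 < √(1 - x ^ 2) := Real.sqrt_pos.2 (by nlinarith)
  rw [← le_div_iff₀ hs, artanh_eq_real_artanh h0 h1, ← Real.sinh_artanh ⟨by linarith, h1⟩]
  exact Real.self_le_sinh_iff.2 (Real.artanh_nonneg h0)

/-- Nonnegativity of the quadratic `f` for `z ≤ a`: the bound `a s ≤ q` is the only information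
on `q` that is needed. -/
lemma quadratic_nonneg {a c r s q z : ℝ} (ha : 0 < a) (hc : 0 ≤ c) (hs : 0 ≤ s)
    (hca : c ^ 2 = 1 - a ^ 2) (hsr : s ^ 2 = 1 - r ^ 2) (har : a ^ 2 ≤ r ^ 2)
    (hz : z ≤ a) (hq : a * s ≤ q) :
    0 ≤ (1 - c) / 2 * (r ^ 2 - z ^ 2) + (a - z) * (q - z) := by
  have hc1 : c ≤ 1 := by nlinarith
  have hsc : s ≤ c := by nlinarith
  rcases le_total (c * a) q with h | h
  · have e : (1 - c) / 2 * (r ^ 2 - z ^ 2) + (a - z) * (q - z)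
        = (1 - c) / 2 * (r ^ 2 - a ^ 2)
          + (a - z) * ((1 + c) / 2 * (a - z) + (q - c * a)) := by ring
    rw [e]
    have h1 : 0 ≤ a - z := sub_nonneg.2 hz
    have h2 : 0 ≤ q - c * a := sub_nonneg.2 h
    have h3 : 0 ≤ r ^ 2 - a ^ 2 := sub_nonneg.2 har
    have h4 : 0 ≤ 1 - c := sub_nonneg.2 hc1
    positivity
  · -- `q² - 2caq + a²s² = -(q - as)(ca - q) - a(c - s)q - (as)(ca - as)`
    have hD : q ^ 2 - 2 * c * a * q + a ^ 2 * s ^ 2 ≤ 0 := by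
      have hq0 : 0 ≤ q := le_trans (by positivity) hq
      have h1 := mul_nonneg (sub_nonneg.2 hq) (sub_nonneg.2 h)
      have h2 : 0 ≤ a * (c - s) * q := by
        have := sub_nonneg.2 hsc
        positivity
      have h3 : 0 ≤ a * s * (a * (c - s)) := by
        have := sub_nonneg.2 hsc
        positivity
      nlinarith
    have e : 2 * (1 + c) * ((1 - c) / 2 * (r ^ 2 - z ^ 2) + (a - z) * (q - z))
        = ((1 + c) * z - (a + q)) ^ 2 - (q ^ 2 - 2 * c * a * q + a ^ 2 * s ^ 2) := by
      rw [hsr]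
      linear_combination (-r ^ 2) * hca
    have h5 : 0 ≤ 2 * (1 + c) * ((1 - c) / 2 * (r ^ 2 - z ^ 2) + (a - z) * (q - z)) := by
      rw [e]
      nlinarith [sq_nonneg ((1 + c) * z - (a + q))]
    exact nonneg_of_mul_nonneg_right h5 (by positivity)

/-- Key sufficiency estimate: for the marginally P-divisible dynamics with
2Γ = α·γ₊, α = 1 − √(1 − z∞²), the entropy production is nonnegative throughout
the critical zone. -/
theorem marginal_entropy_production_nonneg
    (zinf : ℝ) (h1 : 0 < zinf) (h2 : zinf < 1)
    (z ℓ : ℝ) (hz0 : 0 ≤ z) (hz : z ≤ zinf) (hℓ : 0 ≤ ℓ)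
    (hlo : zinf ^ 2 ≤ ℓ ^ 2 + z ^ 2) (hhi : ℓ ^ 2 + z ^ 2 < 1) :
    0 ≤ (1 - Real.sqrt (1 - zinf ^ 2)) / 2 *
          (ℓ ^ 2 / Real.sqrt (ℓ ^ 2 + z ^ 2)) * artanh (Real.sqrt (ℓ ^ 2 + z ^ 2))
        + (zinf - z) *
          (artanh zinf - z / Real.sqrt (ℓ ^ 2 + z ^ 2) * artanh (Real.sqrt (ℓ ^ 2 + z ^ 2))) := by
  set r := √(ℓ ^ 2 + z ^ 2) with hr
  have hr2 : r ^ 2 = ℓ ^ 2 + z ^ 2 := Real.sq_sqrt (by positivity)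
  have har : zinf ≤ r := Real.le_sqrt_of_sq_le hlo
  have hr0 : 0 < r := h1.trans_le har
  have hr1 : r < 1 := by nlinarith
  have hA : 0 < artanh r := hr0.trans_le (self_le_artanh hr0.le hr1)
  have hq : zinf * √(1 - r ^ 2) ≤ artanh zinf * r / artanh r := by
    rw [le_div_iff₀ hA]
    have h3 := artanh_mul_sqrt_le hr0.le hr1
    have h4 := self_le_artanh h1.le h2
    calc zinf * √(1 - r ^ 2) * artanh r = zinf * (artanh r * √(1 - r ^ 2)) := by ring
      _ ≤ zinf * r := by gcongr
      _ ≤ artanh zinf * r := by gcongr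
  have key := quadratic_nonneg (z := z) h1 (Real.sqrt_nonneg (1 - zinf ^ 2))
    (Real.sqrt_nonneg (1 - r ^ 2)) (Real.sq_sqrt (by nlinarith)) (Real.sq_sqrt (by nlinarith))
    (by rw [hr2]; exact hlo) hz hq
  have e : (1 - √(1 - zinf ^ 2)) / 2 * (ℓ ^ 2 / r) * artanh r
      + (zinf - z) * (artanh zinf - z / r * artanh r)
      = artanh r / r * ((1 - √(1 - zinf ^ 2)) / 2 * (r ^ 2 - z ^ 2)
        + (zinf - z) * (artanh zinf * r / artanh r - z)) := by
    have hl : ℓ ^ 2 = r ^ 2 - z ^ 2 := by linarith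
    rw [hl]
    field_simp
  rw [e]
  exact mul_nonneg (by positivity) key
end
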